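/- arXiv:2205.08991 — 3 statements merged into one kernel-verified Lean document; each statement's English description precedes it below -/
import Mathlib

section
/- Let A be a subalgebra of the algebra of n×n complex matrices (acting on column vectors on the left and on row vectors on the right). Suppose there exists M ∈ A having a simple eigenvalue λ, and let v be a nonzero column vector with Mv = λv and w a nonzero row vector with wM = λw. Then the following are equivalent: (i) the left A-module ℂⁿ (column vectors) is simple; (ii) both Av = ℂⁿ (column vectors) and wA = ℂⁿ (row vectors); (iii) the right A-module ℂⁿ (row vectors) is simple. -/
/-!
Put `f := M - λ`. An `A`-invariant subspace `U` not containing `v` meets `ker f`, the line through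
`v`, trivially, so `f` is injective and hence surjective on `U`; as `w f = 0`, this forces
`w U = 0`. Thus `v ∈ U` or `w U = 0`, and accordingly `A v ⊆ U` or `(w A) U = 0`. The statements
about rows and columns are exchanged by passing to annihilators under the dot product.
-/

open Matrix Module Module.End

section Eigenspace

variable {K V : Type*} [Field K] [AddCommGroup V] [Module K V]

theorem finrank_eigenspace_eq_one_of_rootMultiplicity_charpoly_eq_one [FiniteDimensional K V]
    {f : End K V} {μ : K} (h : f.charpoly.rootMultiplicity μ = 1) :
    finrank K (f.eigenspace μ) = 1 := by
  have hroot : f.charpoly.IsRoot μ :=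
    (Polynomial.rootMultiplicity_pos f.charpoly_monic.ne_zero).1 (h ▸ zero_lt_one)
  have hne : f.eigenspace μ ≠ ⊥ := f.hasEigenvalue_iff_isRoot_charpoly μ |>.2 hroot
  exact le_antisymm (h ▸ f.finrank_eigenspace_le μ) (Submodule.one_le_finrank_iff.2 hne)

theorem mem_or_le_ker_of_finrank_eigenspace_eq_one {f : End K V} {μ : K} {v : V}
    (hf : finrank K (f.eigenspace μ) = 1) (hv : f.HasEigenvector μ v)
    {φ : Dual K V} (hφ : φ ∘ₗ f = μ • φ) {U : Submodule K V} [FiniteDimensional K U]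
    (hU : ∀ u ∈ U, f u ∈ U) : v ∈ U ∨ U ≤ LinearMap.ker φ := by
  refine or_iff_not_imp_left.2 fun hvU ↦ ?_
  have hmaps : ∀ u ∈ U, (f - μ • 1) u ∈ U := fun u hu ↦
    U.sub_mem (hU u hu) (U.smul_mem μ hu)
  have hdisj : Disjoint U (LinearMap.ker (f - μ • 1)) := by
    rw [← eigenspace_def, eq_span_singleton_of_mem_of_finrank_eq_one hf hv.1 hv.2]
    exact (Submodule.disjoint_span_singleton' hv.2).2 hvU
  have hsurj : Set.SurjOn (f - μ • 1 : End K V) U U :=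
    (LinearMap.injOn_iff_surjOn hmaps).1 (LinearMap.injOn_of_disjoint_ker le_rfl hdisj)
  intro u hu
  obtain ⟨x, -, rfl⟩ := hsurj hu
  have hφx : φ (f x) = μ • φ x := LinearMap.congr_fun hφ x
  simp [hφx]

end Eigenspace

section CommSemiring

variable {R ι : Type*} [CommSemiring R] [Fintype ι] [DecidableEq ι]

/-- The subalgebra of transposes of the elements of `A`; its action on column vectors is the right
action of `A` on row vectors. -/
def transposeSubalgebra (A : Subalgebra R (Matrix ι ι R)) : Subalgebra R (Matrix ι ι R) :=
  A.op.comap (transposeAlgEquiv ι R R).toAlgHom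

/-- Simplicity of the module of column vectors over `A`, in terms of invariant subspaces. The
zero module is not excluded. -/
def ActsIrreducibly (A : Subalgebra R (Matrix ι ι R)) : Prop :=
  ∀ U : Submodule R (ι → R), (∀ N ∈ A, ∀ u ∈ U, N *ᵥ u ∈ U) → U = ⊥ ∨ U = ⊤

variable {A : Subalgebra R (Matrix ι ι R)}

theorem mem_transposeSubalgebra {N : Matrix ι ι R} : N ∈ transposeSubalgebra A ↔ Nᵀ ∈ A :=
  Iff.rfl

theorem transpose_mem_transposeSubalgebra {N : Matrix ι ι R} (hN : N ∈ A) :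
    Nᵀ ∈ transposeSubalgebra A := by
  rwa [mem_transposeSubalgebra, transpose_transpose]

theorem transposeSubalgebra_transposeSubalgebra :
    transposeSubalgebra (transposeSubalgebra A) = A := by
  ext N
  simp only [mem_transposeSubalgebra, transpose_transpose]

theorem actsIrreducibly_transposeSubalgebra_iff_vecMul :
    ActsIrreducibly (transposeSubalgebra A) ↔
      ∀ U : Submodule R (ι → R), (∀ N ∈ A, ∀ u ∈ U, u ᵥ* N ∈ U) → U = ⊥ ∨ U = ⊤ := by
  refine forall_congr' fun U ↦ imp_congr_left ⟨fun h N hN u hu ↦ ?_, fun h N hN u hu ↦ ?_⟩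
  · rw [← mulVec_transpose]
    exact h Nᵀ (transpose_mem_transposeSubalgebra hN) u hu
  · rw [← vecMul_transpose]
    exact h Nᵀ (mem_transposeSubalgebra.1 hN) u hu

theorem ActsIrreducibly.exists_mulVec_eq (hA : ActsIrreducibly A) {v : ι → R} (hv : v ≠ 0)
    (u : ι → R) : ∃ N ∈ A, N *ᵥ v = u := by
  let orbit : Submodule R (ι → R) := A.toSubmodule.map ((mulVecBilin R R).flip v)
  have horbit : orbit = ⊥ ∨ orbit = ⊤ := by
    refine hA orbit ?_
    rintro N hN _ ⟨P, hP, rfl⟩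
    exact ⟨N * P, A.mul_mem hN hP, (mulVec_mulVec v N P).symm⟩
  have hv_mem : v ∈ orbit := ⟨1, A.one_mem, one_mulVec v⟩
  have htop : orbit = ⊤ := horbit.resolve_left (Submodule.ne_bot_iff _ |>.2 ⟨v, hv_mem, hv⟩)
  exact htop.ge (Submodule.mem_top (x := u))

theorem eq_bot_of_forall_dotProduct_eq_zero {w : ι → R} (hw : ∀ u, ∃ N ∈ A, w ᵥ* N = u)
    {U : Submodule R (ι → R)} (hU : ∀ N ∈ A, ∀ u ∈ U, N *ᵥ u ∈ U)
    (hwU : ∀ u ∈ U, w ⬝ᵥ u = 0) : U = ⊥ := by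
  refine (Submodule.eq_bot_iff U).2 fun u hu ↦ dotProduct_eq_zero u fun x ↦ ?_
  obtain ⟨N, hN, rfl⟩ := hw x
  rw [dotProduct_comm, ← dotProduct_mulVec]
  exact hwU _ (hU N hN u hu)

end CommSemiring

section Field

variable {K ι : Type*} [Field K] [Fintype ι] [DecidableEq ι] {A : Subalgebra K (Matrix ι ι K)}

namespace ActsIrreducibly

protected theorem transposeSubalgebra (hA : ActsIrreducibly A) :
    ActsIrreducibly (transposeSubalgebra A) := by
  intro U hU
  let annihilator : Submodule K (ι → K) :=
    U.dualAnnihilator.comap (dotProductEquiv K ι : (ι → K) →ₗ[K] Dual K (ι → K))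
  have hinvariant : ∀ N ∈ A, ∀ x ∈ annihilator, N *ᵥ x ∈ annihilator := by
    intro N hN x hx
    refine (Submodule.mem_dualAnnihilator _).2 fun u hu ↦ ?_
    calc N *ᵥ x ⬝ᵥ u = x ⬝ᵥ Nᵀ *ᵥ u := by
          rw [dotProduct_mulVec, vecMul_transpose]
      _ = 0 := (Submodule.mem_dualAnnihilator _).1 hx _
          (hU _ (transpose_mem_transposeSubalgebra hN) u hu)
  rcases hA annihilator hinvariant with hbot | htop
  · exact .inr <| by simpa [annihilator, Submodule.comap_equiv_eq_map_symm] using hbot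
  · exact .inl <| by simpa [annihilator, Submodule.comap_equiv_eq_map_symm] using htop

theorem exists_vecMul_eq (hA : ActsIrreducibly A) {w : ι → K} (hw : w ≠ 0) (u : ι → K) :
    ∃ N ∈ A, w ᵥ* N = u := by
  obtain ⟨N, hN, rfl⟩ := hA.transposeSubalgebra.exists_mulVec_eq hw u
  exact ⟨Nᵀ, hN, vecMul_transpose N w⟩

end ActsIrreducibly

theorem actsIrreducibly_transposeSubalgebra_iff :
    ActsIrreducibly (transposeSubalgebra A) ↔ ActsIrreducibly A :=
  ⟨fun h ↦ transposeSubalgebra_transposeSubalgebra (A := A) ▸ h.transposeSubalgebra,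
    fun h ↦ h.transposeSubalgebra⟩

theorem mem_or_forall_dotProduct_eq_zero {M : Matrix ι ι K} {μ : K}
    (hM : finrank K (eigenspace (toLin' M) μ) = 1)
    {v : ι → K} (hv : v ≠ 0) (hMv : M *ᵥ v = μ • v) {w : ι → K} (hwM : w ᵥ* M = μ • w)
    {U : Submodule K (ι → K)} (hU : ∀ u ∈ U, M *ᵥ u ∈ U) :
    v ∈ U ∨ ∀ u ∈ U, w ⬝ᵥ u = 0 := by
  have heigenvector : HasEigenvector (toLin' M) μ v := ⟨mem_eigenspace_iff.2 hMv, hv⟩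
  have hdual : dotProductEquiv K ι w ∘ₗ toLin' M = μ • dotProductEquiv K ι w :=
    LinearMap.ext fun u ↦ by
      calc w ⬝ᵥ M *ᵥ u = (μ • w) ⬝ᵥ u := by rw [dotProduct_mulVec, hwM]
        _ = μ • (w ⬝ᵥ u) := smul_dotProduct μ w u
  exact mem_or_le_ker_of_finrank_eigenspace_eq_one hM heigenvector hdual hU

theorem actsIrreducibly_iff_of_finrank_eigenspace_eq_one {M : Matrix ι ι K} (hMA : M ∈ A) {μ : K}
    (hM : finrank K (eigenspace (toLin' M) μ) = 1)
    {v : ι → K} (hv : v ≠ 0) (hMv : M *ᵥ v = μ • v)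
    {w : ι → K} (hw : w ≠ 0) (hwM : w ᵥ* M = μ • w) :
    ActsIrreducibly A ↔ (∀ u, ∃ N ∈ A, N *ᵥ v = u) ∧ (∀ u, ∃ N ∈ A, w ᵥ* N = u) := by
  refine ⟨fun hA ↦ ⟨hA.exists_mulVec_eq hv, hA.exists_vecMul_eq hw⟩, ?_⟩
  rintro ⟨hAv, hwA⟩ U hU
  rcases mem_or_forall_dotProduct_eq_zero hM hv hMv hwM (hU M hMA) with hvU | hwU
  · refine .inr <| Submodule.eq_top_iff'.2 fun u ↦ ?_
    obtain ⟨N, hN, rfl⟩ := hAv u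
    exact hU N hN v hvU
  · exact .inl <| eq_bot_of_forall_dotProduct_eq_zero hwA hU hwU

end Field

theorem stmt0_general {K ι : Type*} [Field K] [Fintype ι] [DecidableEq ι]
    (A : Subalgebra K (Matrix ι ι K)) (M : Matrix ι ι K) (hM : M ∈ A) (lam : K)
    (hgeometric : finrank K (eigenspace (toLin' M) lam) = 1)
    (v : ι → K) (hv : v ≠ 0) (hMv : M *ᵥ v = lam • v)
    (w : ι → K) (hw : w ≠ 0) (hwM : w ᵥ* M = lam • w) :
    ((∀ U : Submodule K (ι → K), (∀ N ∈ A, ∀ u ∈ U, N *ᵥ u ∈ U) → U = ⊥ ∨ U = ⊤) ↔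
      ((∀ u : ι → K, ∃ N ∈ A, N *ᵥ v = u) ∧ (∀ u : ι → K, ∃ N ∈ A, w ᵥ* N = u))) ∧
    (((∀ u : ι → K, ∃ N ∈ A, N *ᵥ v = u) ∧ (∀ u : ι → K, ∃ N ∈ A, w ᵥ* N = u)) ↔
      (∀ U : Submodule K (ι → K), (∀ N ∈ A, ∀ u ∈ U, u ᵥ* N ∈ U) → U = ⊥ ∨ U = ⊤)) := by
  have hcolumns := actsIrreducibly_iff_of_finrank_eigenspace_eq_one hM hgeometric hv hMv hw hwM
  exact ⟨hcolumns, hcolumns.symm.trans <| actsIrreducibly_transposeSubalgebra_iff.symm.trans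
    actsIrreducibly_transposeSubalgebra_iff_vecMul⟩

/-- Norton's criterion (Proposition: simple eigenvalue test).
(i) the left A-module ℂⁿ is simple ↔ (ii) Av = ℂⁿ and wA = ℂⁿ ↔
(iii) the right A-module ℂⁿ is simple. -/
theorem stmt0 (n : ℕ) (A : Subalgebra ℂ (Matrix (Fin n) (Fin n) ℂ))
    (M : Matrix (Fin n) (Fin n) ℂ) (hM : M ∈ A) (lam : ℂ)
    (hsimple : (Matrix.charpoly M).rootMultiplicity lam = 1)
    (v : Fin n → ℂ) (hv : v ≠ 0) (hMv : M.mulVec v = lam • v)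
    (w : Fin n → ℂ) (hw : w ≠ 0) (hwM : Matrix.vecMul w M = lam • w) :
    ((∀ U : Submodule ℂ (Fin n → ℂ),
        (∀ N ∈ A, ∀ u ∈ U, N.mulVec u ∈ U) → U = ⊥ ∨ U = ⊤) ↔
      ((∀ u : Fin n → ℂ, ∃ N ∈ A, N.mulVec v = u) ∧
       (∀ u : Fin n → ℂ, ∃ N ∈ A, Matrix.vecMul w N = u)))
    ∧
    (((∀ u : Fin n → ℂ, ∃ N ∈ A, N.mulVec v = u) ∧
      (∀ u : Fin n → ℂ, ∃ N ∈ A, Matrix.vecMul w N = u)) ↔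
      (∀ U : Submodule ℂ (Fin n → ℂ),
        (∀ N ∈ A, ∀ u ∈ U, Matrix.vecMul u N ∈ U) → U = ⊥ ∨ U = ⊤)) := by
  exact stmt0_general A M hM lam (finrank_eigenspace_eq_one_of_rootMultiplicity_charpoly_eq_one
    (by rwa [charpoly_toLin'])) v hv hMv w hw hwM
end

section
/- Let A be a subalgebra of n×n complex matrices such that every element of A has at least one eigenvalue of algebraic multiplicity ≥ 2. Let M ∈ A have the maximal number of distinct eigenvalues among elements of A, let λ be a multiple eigenvalue of M, let E = ker((M − λI)ⁿ) be its generalized eigenspace, F the sum of the other generalized eigenspaces, and P ∈ A the projection onto E along F. Define K = {v ∈ E : for all N ∈ A, PNv ∈ ℂv}. Then K ≠ {0}, and for any nonzero v ∈ K, the orbit Av is a proper A-submodule of ℂⁿ. In particular ℂⁿ is a reducible A-module. -/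
/-- Generalized eigenspace of an n×n matrix for an eigenvalue λ. -/
noncomputable def genE (n : ℕ) (M : Matrix (Fin n) (Fin n) ℂ) (lam : ℂ) :
    Submodule ℂ (Fin n → ℂ) :=
  LinearMap.ker (Matrix.mulVecLin ((M - lam • (1 : Matrix (Fin n) (Fin n) ℂ)) ^ n))

/-- Sum of the generalized eigenspaces of M for values other than λ. -/
noncomputable def genF (n : ℕ) (M : Matrix (Fin n) (Fin n) ℂ) (lam : ℂ) :
    Submodule ℂ (Fin n → ℂ) :=
  ⨆ μ ≠ lam, genE n M μ

/-!
Compressing `A` to `E` yields the operators `PNP`, which form an algebra of endomorphisms of `E`.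
Each has a single eigenvalue: after translating `N` by a scalar, the spectrum of the compression is
disjoint from that of `M`, and gluing it to `M` on the complement of `E` gives an element
`M(1 - P) + PNP` of `A` that has all eigenvalues of `M` but `λ`, together with those of the
compression. Maximality of `M` leaves room for only one of the latter.

On a simple submodule `W` of `E` the compressions are all of `End W` by Burnside's theorem, and
`End W` contains operators with two eigenvalues unless `W` is a line; so `W` is spanned by a vector
`v` with `PAv ⊆ ℂv`. If moreover `Av` were everything, then `E = PE ⊆ PAv ⊆ ℂv`, against
`dim E ≥ 2`.
-/

open Module Submodule LinearMap

section CommonEigenvector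

variable {K : Type*} [Field K]

theorem mem_spectrum_of_apply_eq_smul {R V : Type*} [CommRing R] [AddCommGroup V] [Module R V]
    {T : End R V} {v : V} {a : R} (hv : v ≠ 0) (h : T v = a • v) : a ∈ spectrum R T :=
  (End.hasEigenvalue_of_hasEigenvector
    (End.hasEigenvector_iff.2 ⟨End.mem_eigenspace_iff.2 h, hv⟩)).mem_spectrum

theorem exists_apply_eq_smul_of_mem_spectrum {V : Type*} [AddCommGroup V] [Module K V]
    [FiniteDimensional K V] {T : End K V} {a : K} (ha : a ∈ spectrum K T) :
    ∃ v ≠ 0, T v = a • v :=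
  have ⟨v, hv⟩ := (End.hasEigenvalue_iff_mem_spectrum.2 ha).exists_hasEigenvector
  ⟨v, hv.2, hv.apply_eq_smul⟩

theorem mem_span_singleton_of_forall_spectrum_subsingleton {V : Type*} [AddCommGroup V]
    [Module K V] (h : ∀ T : End K V, (spectrum K T).Subsingleton) {v : V} (hv : v ≠ 0) (w : V) :
    w ∈ span K {v} := by
  by_contra hw
  obtain ⟨φ, hφw, hφ⟩ := exists_dual_map_eq_bot_of_notMem hw inferInstance
  have hφv : φ v = 0 := by
    simpa [hφ] using mem_map_of_mem (f := φ) (mem_span_singleton_self v)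
  have hw0 : w ≠ 0 := fun hw0 ↦ hφw (by rw [hw0, map_zero])
  exact hφw (h (φ.smulRight w) (mem_spectrum_of_apply_eq_smul hw0 rfl)
    (mem_spectrum_of_apply_eq_smul hv (by simp [hφv])))

theorem lsmul_surjective_of_isSimpleModule (R W : Type*) [IsAlgClosed K] [Ring R] [Algebra K R]
    [AddCommGroup W] [Module K W] [FiniteDimensional K W] [Module R W] [IsScalarTower K R W]
    [IsSimpleModule R W] : Function.Surjective (Algebra.lsmul K K W : R → End K W) := by
  intro T
  have : Module.Finite (End R W) W := Module.Finite.of_restrictScalars_finite K (End R W) W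
  have T_comm (g : End R W) (w : W) : T (g w) = g (T w) := by
    obtain ⟨c, rfl⟩ := (IsSimpleModule.algebraMap_end_bijective_of_isAlgClosed K).2 g
    simp only [Module.algebraMap_end_apply, map_smul]
  obtain ⟨r, hr⟩ := Module.Finite.toModuleEnd_moduleEnd_surjective (R := R) (M := W)
    { T.toAddMonoidHom with map_smul' := T_comm }
  exact ⟨r, LinearMap.ext fun w ↦ congr($hr w)⟩

theorem exists_ne_zero_forall_smul_mem_span (R V : Type*) [IsAlgClosed K] [Ring R] [Algebra K R]
    [AddCommGroup V] [Module K V] [FiniteDimensional K V] [Nontrivial V] [Module R V]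
    [IsScalarTower K R V] (h : ∀ r : R, (spectrum K (Algebra.lsmul K K V r)).Subsingleton) :
    ∃ v : V, v ≠ 0 ∧ ∀ r : R, r • v ∈ span K {v} := by
  have : IsArtinian R V := isArtinian_of_tower K inferInstance
  obtain ⟨W, hW⟩ := IsAtomic.exists_atom (Submodule R V)
  have : IsSimpleModule R W := isSimpleModule_iff_isAtom.2 hW
  have : Nontrivial W := IsSimpleModule.nontrivial R W
  have : FiniteDimensional K W :=
    .of_injective (W.subtype.restrictScalars K) W.subtype_injective
  have hWV (r : R) :
      spectrum K (Algebra.lsmul K K W r) ⊆ spectrum K (Algebra.lsmul K K V r) := by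
    intro a ha
    obtain ⟨w, hw0, hw⟩ := exists_apply_eq_smul_of_mem_spectrum ha
    exact mem_spectrum_of_apply_eq_smul (W.coe_eq_zero.not.2 hw0) congr(($hw : V))
  have hW' (T : End K W) : (spectrum K T).Subsingleton := by
    obtain ⟨r, rfl⟩ := lsmul_surjective_of_isSimpleModule R W T
    exact (h r).anti (hWV r)
  obtain ⟨w, hw0⟩ := exists_ne (0 : W)
  refine ⟨w, W.coe_eq_zero.not.2 hw0, fun r ↦ ?_⟩
  obtain ⟨c, hc⟩ := mem_span_singleton.1
    (mem_span_singleton_of_forall_spectrum_subsingleton hW' hw0 (r • w))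
  exact mem_span_singleton.2 ⟨c, congr(($hc : V))⟩

theorem exists_ne_zero_forall_apply_mem_span {V : Type*} [IsAlgClosed K] [AddCommGroup V]
    [Module K V] [FiniteDimensional K V] [Nontrivial V] {B : Subalgebra K (End K V)}
    (hB : ∀ T ∈ B, (spectrum K T).Subsingleton) : ∃ v ≠ 0, ∀ T ∈ B, T v ∈ span K {v} := by
  have hBv (T : B) : (spectrum K (Algebra.lsmul K K V T)).Subsingleton := hB T T.2
  obtain ⟨v, hv0, hv⟩ := exists_ne_zero_forall_smul_mem_span (K := K) B V hBv
  exact ⟨v, hv0, fun T hT ↦ hv ⟨T, hT⟩⟩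

end CommonEigenvector

section Compression

variable {K R V : Type*} [CommRing K] [Ring R] [Algebra K R] [AddCommGroup V] [Module K V]
  [Module R V] [IsScalarTower K R V] {E : Submodule K V} {P : R}

/-- The compression `x ↦ P r x` of the action of `r` on `V` to the range `E` of a projection
`P`. -/
def compression (hP : IsProj E (Algebra.lsmul K K V P)) : R →ₗ[K] End K E where
  toFun r := hP.codRestrict ∘ₗ Algebra.lsmul K K V r ∘ₗ E.subtype
  map_add' r s := by simp only [map_add, add_comp, comp_add]
  map_smul' c r := by simp only [map_smul, smul_comp, comp_smul, RingHom.id_apply]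

theorem coe_compression_apply (hP : IsProj E (Algebra.lsmul K K V P)) (r : R) (x : E) :
    (compression hP r x : V) = P • r • (x : V) :=
  rfl

theorem compression_one (hP : IsProj E (Algebra.lsmul K K V P)) : compression hP 1 = 1 := by
  ext x
  rw [coe_compression_apply, one_smul, End.one_apply]
  exact hP.map_id x x.2

theorem compression_mul_compression (hP : IsProj E (Algebra.lsmul K K V P)) (r s : R) :
    compression hP r * compression hP s = compression hP (r * P * s) := by
  ext x
  simp only [End.mul_apply, coe_compression_apply, mul_smul]

theorem spectrum_compression_add_algebraMap (hP : IsProj E (Algebra.lsmul K K V P)) (N : R)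
    (t : K) : spectrum K (compression hP (N + algebraMap K R t)) =
      (· + t) '' spectrum K (compression hP N) := by
  rw [map_add, Algebra.algebraMap_eq_smul_one, map_smul, compression_one,
    ← Algebra.algebraMap_eq_smul_one, ← spectrum.add_singleton_eq, Set.add_singleton]

/-- The compressions of all `r : R` to the range of a projection `P : R`, which form an algebra of
endomorphisms because `P ∈ R`. -/
def compressedSubalgebra (hP : IsProj E (Algebra.lsmul K K V P)) : Subalgebra K (End K E) :=
  (LinearMap.range (compression hP)).toSubalgebra ⟨1, compression_one hP⟩ <| by
    rintro _ _ ⟨r, rfl⟩ ⟨s, rfl⟩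
    exact ⟨r * P * s, (compression_mul_compression hP r s).symm⟩

end Compression

section EigenvalueCount

variable {K R V : Type*} [Field K] [Ring R] [Algebra K R] [AddCommGroup V] [Module K V]
  [FiniteDimensional K V] [Module R V] [IsScalarTower K R V] {E : Submodule K V} {M P : R} {μ : K}

theorem spectrum_compression_subset (hP : IsProj E (Algebra.lsmul K K V P)) (M N : R) :
    spectrum K (compression hP N) ⊆
      spectrum K (Algebra.lsmul K K V (M * (1 - P) + P * N * P)) := by
  intro a ha
  obtain ⟨x, hx0, hx⟩ := exists_apply_eq_smul_of_mem_spectrum ha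
  have hPx : P • (x : V) = x := hP.map_id x x.2
  have hPNx : P • N • (x : V) = a • (x : V) := congr(($hx : V))
  refine mem_spectrum_of_apply_eq_smul (E.coe_eq_zero.not.2 hx0) ?_
  simp [hPx, hPNx]

theorem spectrum_sdiff_singleton_subset
    (hker : ∀ ν ≠ μ, End.eigenspace (Algebra.lsmul K K V M) ν ≤ ker (Algebra.lsmul K K V P))
    (N : R) :
    spectrum K (Algebra.lsmul K K V M) \ {μ} ⊆
      spectrum K (Algebra.lsmul K K V (M * (1 - P) + P * N * P)) := by
  rintro ν ⟨hν, hνμ⟩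
  obtain ⟨x, hx0, hx⟩ := exists_apply_eq_smul_of_mem_spectrum hν
  have hPx : P • x = 0 := hker ν hνμ (End.mem_eigenspace_iff.2 hx)
  have hMx : M • x = ν • x := hx
  refine mem_spectrum_of_apply_eq_smul hx0 ?_
  simp [hPx, hMx]

theorem spectrum_compression_subsingleton_of_disjoint
    (hmax : ∀ N : R, (spectrum K (Algebra.lsmul K K V N)).ncard ≤
      (spectrum K (Algebra.lsmul K K V M)).ncard)
    (hP : IsProj E (Algebra.lsmul K K V P))
    (hker : ∀ ν ≠ μ, End.eigenspace (Algebra.lsmul K K V M) ν ≤ ker (Algebra.lsmul K K V P))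
    {N : R} (hdisj : Disjoint (spectrum K (Algebra.lsmul K K V M))
      (spectrum K (compression hP N))) :
    (spectrum K (compression hP N)).Subsingleton := by
  set S := spectrum K (Algebra.lsmul K K V M)
  set T := spectrum K (compression hP N)
  have hS : S.Finite := End.finite_spectrum _
  have hT : T.Finite := End.finite_spectrum _
  have hcount : (S \ {μ}).ncard + T.ncard ≤ S.ncard := calc
    (S \ {μ}).ncard + T.ncard = (S \ {μ} ∪ T).ncard :=
      (Set.ncard_union_eq (hdisj.mono_left Set.sdiff_subset) hS.sdiff hT).symm
    _ ≤ (spectrum K (Algebra.lsmul K K V (M * (1 - P) + P * N * P))).ncard :=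
      Set.ncard_le_ncard (Set.union_subset (spectrum_sdiff_singleton_subset hker N)
        (spectrum_compression_subset hP M N)) (End.finite_spectrum _)
    _ ≤ S.ncard := hmax _
  have hS1 : S.ncard - 1 ≤ (S \ {μ}).ncard := Set.pred_ncard_le_ncard_sdiff_singleton S μ
  exact fun a ha b hb ↦ (Set.ncard_le_one hT).1 (by lia) a ha b hb

theorem spectrum_compression_subsingleton [Infinite K]
    (hmax : ∀ N : R, (spectrum K (Algebra.lsmul K K V N)).ncard ≤
      (spectrum K (Algebra.lsmul K K V M)).ncard)
    (hP : IsProj E (Algebra.lsmul K K V P))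
    (hker : ∀ ν ≠ μ, End.eigenspace (Algebra.lsmul K K V M) ν ≤ ker (Algebra.lsmul K K V P))
    (N : R) : (spectrum K (compression hP N)).Subsingleton := by
  obtain ⟨t, ht⟩ : ∃ t, t ∉ Set.image2 (· - ·) (spectrum K (Algebra.lsmul K K V M))
      (spectrum K (compression hP N)) :=
    ((End.finite_spectrum _).image2 _ (End.finite_spectrum _)).exists_notMem
  have hdisj : Disjoint (spectrum K (Algebra.lsmul K K V M))
      (spectrum K (compression hP (N + algebraMap K R t))) := by
    rw [spectrum_compression_add_algebraMap, Set.disjoint_right]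
    rintro _ ⟨a, ha, rfl⟩ hat
    exact ht ⟨a + t, hat, a, ha, add_sub_cancel_left a t⟩
  have hshift := spectrum_compression_subsingleton_of_disjoint hmax hP hker hdisj
  rw [spectrum_compression_add_algebraMap] at hshift
  exact Set.subsingleton_of_image (add_left_injective t) _ hshift

theorem exists_ne_zero_forall_projection_smul_mem_span [IsAlgClosed K] [Nontrivial E]
    (hmax : ∀ N : R, (spectrum K (Algebra.lsmul K K V N)).ncard ≤
      (spectrum K (Algebra.lsmul K K V M)).ncard)
    (hP : IsProj E (Algebra.lsmul K K V P))
    (hker : ∀ ν ≠ μ, End.eigenspace (Algebra.lsmul K K V M) ν ≤ ker (Algebra.lsmul K K V P)) :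
    ∃ v ∈ E, v ≠ 0 ∧ ∀ N : R, P • N • v ∈ span K {v} := by
  have hB : ∀ T ∈ compressedSubalgebra hP, (spectrum K T).Subsingleton := by
    rintro _ ⟨N, rfl⟩
    exact spectrum_compression_subsingleton hmax hP hker N
  obtain ⟨v, hv0, hv⟩ := exists_ne_zero_forall_apply_mem_span hB
  refine ⟨v, v.2, E.coe_eq_zero.not.2 hv0, fun N ↦ ?_⟩
  obtain ⟨c, hc⟩ := mem_span_singleton.1 (hv (compression hP N) ⟨N, rfl⟩)
  exact mem_span_singleton.2 ⟨c, congr(($hc : V))⟩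

end EigenvalueCount

theorem span_singleton_ne_top_of_forall_projection_smul_mem_span {K R V : Type*} [Field K]
    [Ring R] [AddCommGroup V] [Module K V] [Module R V] {E : Submodule K V} {P : R}
    (hP : ∀ x ∈ E, P • x = x) (hE : 2 ≤ finrank K E) {v : V}
    (hv : ∀ N : R, P • N • v ∈ span K {v}) : span R {v} ≠ ⊤ := by
  intro htop
  have hEv : E ≤ span K {v} := fun u hu ↦ by
    obtain ⟨N, rfl⟩ := mem_span_singleton.1 (htop.ge (mem_top (x := u)))
    exact hP _ hu ▸ hv N
  have hE1 : finrank K E ≤ 1 := by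
    simpa using (finrank_mono hEv).trans (finrank_span_le_card {v})
  lia

theorem isProj_maxGenEigenspace {K V : Type*} [Field K] [IsAlgClosed K] [AddCommGroup V]
    [Module K V] [FiniteDimensional K V] {M P : End K V} {μ : K}
    (hP1 : ∀ x ∈ M.maxGenEigenspace μ, P x = x)
    (hP2 : ∀ x ∈ ⨆ ν ≠ μ, M.maxGenEigenspace ν, P x = 0) :
    IsProj (M.maxGenEigenspace μ) P where
  map_id := hP1
  map_mem x := by
    have hsup : M.maxGenEigenspace μ ⊔ ⨆ ν ≠ μ, M.maxGenEigenspace ν = ⊤ := by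
      rw [← iSup_split_single, End.iSup_maxGenEigenspace_eq_top]
    obtain ⟨e, he, f, hf, rfl⟩ := mem_sup.1 (hsup.ge (mem_top (x := x)))
    rwa [map_add, hP1 e he, hP2 f hf, add_zero]

theorem genE_eq_maxGenEigenspace (n : ℕ) (M : Matrix (Fin n) (Fin n) ℂ) (μ : ℂ) :
    genE n M μ = End.maxGenEigenspace (Matrix.toLin' M) μ := by
  rw [End.maxGenEigenspace_eq_genEigenspace_finrank, finrank_fin_fun, End.genEigenspace_nat, genE,
    ← Matrix.toLin'_apply', Matrix.toLin'_pow, map_sub, map_smul, Matrix.toLin'_one,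
    End.one_eq_id]

theorem ncard_spectrum_eq_card_roots_charpoly {K ι : Type*} [Field K] [Fintype ι]
    [DecidableEq ι] [DecidableEq K] (M : Matrix ι ι K) :
    (spectrum K M).ncard = M.charpoly.roots.toFinset.card := by
  rw [← Set.ncard_coe_finset]
  congr 1
  ext a
  simp [Matrix.mem_spectrum_iff_isRoot_charpoly, M.charpoly_monic.ne_zero]

theorem stmt7_general {K R V : Type*} [Field K] [IsAlgClosed K] [Ring R] [Algebra K R]
    [AddCommGroup V] [Module K V] [FiniteDimensional K V] [Module R V] [IsScalarTower K R V]
    {M : R} (hmax : ∀ N : R, (spectrum K (Algebra.lsmul K K V N)).ncard ≤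
      (spectrum K (Algebra.lsmul K K V M)).ncard)
    {μ : K} (hμ : 2 ≤ (Algebra.lsmul K K V M).charpoly.rootMultiplicity μ) {P : R}
    (hP1 : ∀ x ∈ End.maxGenEigenspace (Algebra.lsmul K K V M) μ, P • x = x)
    (hP2 : ∀ x ∈ ⨆ ν ≠ μ, End.maxGenEigenspace (Algebra.lsmul K K V M) ν, P • x = 0) :
    (∃ v ∈ End.maxGenEigenspace (Algebra.lsmul K K V M) μ, v ≠ 0 ∧
      ∀ N : R, P • N • v ∈ span K {v}) ∧
    (∀ v : V, (∀ N : R, P • N • v ∈ span K {v}) → span R {v} ≠ ⊤) ∧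
    ∃ U : Submodule R V, U ≠ ⊥ ∧ U ≠ ⊤ := by
  have hP := isProj_maxGenEigenspace (P := Algebra.lsmul K K V P) hP1 hP2
  have hdim : 2 ≤ finrank K (End.maxGenEigenspace (Algebra.lsmul K K V M) μ) := by
    rwa [finrank_maxGenEigenspace_eq]
  have : Nontrivial (End.maxGenEigenspace (Algebra.lsmul K K V M) μ) :=
    nontrivial_of_finrank_pos (R := K) (by lia)
  have hker (ν : K) (hν : ν ≠ μ) :
      End.eigenspace (Algebra.lsmul K K V M) ν ≤ ker (Algebra.lsmul K K V P) := fun x hx ↦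
    hP2 x (mem_iSup_of_mem ν (mem_iSup_of_mem hν (End.eigenspace_le_maxGenEigenspace hx)))
  have horbit (w : V) (hw : ∀ N : R, P • N • w ∈ span K {w}) : span R {w} ≠ ⊤ :=
    span_singleton_ne_top_of_forall_projection_smul_mem_span hP1 hdim hw
  obtain ⟨v, hvE, hv0, hv⟩ := exists_ne_zero_forall_projection_smul_mem_span hmax hP hker
  exact ⟨⟨v, hvE, hv0, hv⟩, horbit, span R {v}, span_singleton_eq_bot.not.2 hv0, horbit v hv⟩

/-- Van der Hoeven's reducibility criterion: if every element of A has a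
multiple eigenvalue, M ∈ A has the maximal number of distinct eigenvalues,
λ is a multiple eigenvalue of M with generalized eigenspace E and P ∈ A the
projection onto E along the rest, then
K = {v ∈ E : ∀ N ∈ A, PNv ∈ ℂv} is nonzero, the orbit of any nonzero v ∈ K
is a proper A-submodule, and ℂⁿ is a reducible A-module. -/
theorem stmt7 (n : ℕ) (A : Subalgebra ℂ (Matrix (Fin n) (Fin n) ℂ))
    (hmult : ∀ N ∈ A, ∃ μ : ℂ, 2 ≤ (Matrix.charpoly N).rootMultiplicity μ)
    (M : Matrix (Fin n) (Fin n) ℂ) (hM : M ∈ A)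
    (hmax : ∀ N ∈ A, (Matrix.charpoly N).roots.toFinset.card ≤
        (Matrix.charpoly M).roots.toFinset.card)
    (lam : ℂ) (hlam : 2 ≤ (Matrix.charpoly M).rootMultiplicity lam)
    (P : Matrix (Fin n) (Fin n) ℂ) (hPA : P ∈ A)
    (hP1 : ∀ x ∈ genE n M lam, P.mulVec x = x)
    (hP2 : ∀ x ∈ genF n M lam, P.mulVec x = 0) :
    (∃ v ∈ genE n M lam, v ≠ 0 ∧
        ∀ N ∈ A, ∃ c : ℂ, P.mulVec (N.mulVec v) = c • v) ∧
    (∀ v ∈ genE n M lam, v ≠ 0 →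
        (∀ N ∈ A, ∃ c : ℂ, P.mulVec (N.mulVec v) = c • v) →
        ¬ (∀ u : Fin n → ℂ, ∃ N ∈ A, N.mulVec v = u)) ∧
    (∃ U : Submodule ℂ (Fin n → ℂ),
        (∀ N ∈ A, ∀ u ∈ U, N.mulVec u ∈ U) ∧ U ≠ ⊥ ∧ U ≠ ⊤) := by
  have lsmul_eq (N : A) : Algebra.lsmul ℂ ℂ (Fin n → ℂ) N = Matrix.toLin' N.1 := rfl
  have smul_eq (N : A) (v : Fin n → ℂ) : N • v = N.1.mulVec v := rfl
  have key := stmt7_general (K := ℂ) (R := A) (V := Fin n → ℂ) (M := ⟨M, hM⟩) (μ := lam)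
    (P := ⟨P, hPA⟩)
  simp only [lsmul_eq, smul_eq, Matrix.spectrum_toLin', Matrix.charpoly_toLin',
    ncard_spectrum_eq_card_roots_charpoly, ← genE_eq_maxGenEigenspace, mem_span_singleton,
    @eq_comm _ (_ • _ : Fin n → ℂ), ne_eq, span_singleton_eq_top_iff, Subtype.forall,
    Subtype.exists, exists_prop] at key
  obtain ⟨hK, horbit, U, hU⟩ := key hmax hlam hP1 hP2
  exact ⟨hK, fun v _ _ hv ↦ horbit v hv, U.restrictScalars ℂ,
    fun N hN u hu ↦ U.smul_mem ⟨N, hN⟩ hu, by simpa using hU⟩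
end

section
/- A multiplicative semigroup S of nilpotent endomorphisms of a nonzero finite-dimensional complex vector space V has a common nonzero kernel vector: there exists v ∈ V, v ≠ 0, with s(v) = 0 for all s ∈ S. (Equivalently, ∩_{s∈S} ker(s) ≠ {0}.) -/
/-!
A minimal nonzero `S`-invariant submodule `U` is killed by `S`. Otherwise take a minimal nonzero
image `s U` with `s ∈ S`. Then `s t s U = 0` for every `t ∈ S`, because otherwise `s t` would be a
nilpotent map of `s U` onto itself. The invariant submodule `∑ t s U` (`t ∈ S`) is therefore killed
by `s`, while `U` is not, so it is `0` by minimality of `U`. Hence `s U` is invariant, so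
`U = s U`, against the nilpotency of `s`.
-/

section

variable {R M : Type*} [Semiring R] [AddCommMonoid M] [Module R M]

theorem eq_bot_of_le_map_of_isNilpotent {f : Module.End R M} (hf : IsNilpotent f)
    {N : Submodule R M} (hN : N ≤ N.map f) : N = ⊥ := by
  obtain ⟨n, hn⟩ := hf
  have le_map_pow (k : ℕ) : N ≤ N.map (f ^ k) := by
    induction k with
    | zero => exact N.map_id.ge
    | succ k ih =>
      calc N ≤ N.map f := hN
        _ ≤ (N.map (f ^ k)).map f := Submodule.map_mono ih
        _ = N.map (f ^ (k + 1)) := by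
          rw [pow_succ', Module.End.mul_eq_comp, Submodule.map_comp]
  simpa only [hn, Submodule.map_zero, le_bot_iff] using le_map_pow n

theorem map_iSup_map_le (S : Subsemigroup (Module.End R M)) (N : Submodule R M)
    {r : Module.End R M} (hr : r ∈ S) :
    (⨆ t ∈ S, N.map t).map r ≤ ⨆ t ∈ S, N.map t := by
  simp only [Submodule.map_iSup, iSup_le_iff]
  intro t ht
  rw [← Submodule.map_comp, ← Module.End.mul_eq_comp]
  exact le_iSup₂_of_le (r * t) (S.mul_mem hr ht) le_rfl

variable [IsArtinian R M] {S : Subsemigroup (Module.End R M)}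

theorem exists_map_ne_bot_and_map_map_map_eq_bot (hS : ∀ s ∈ S, IsNilpotent s)
    {U : Submodule R M} (hU : ∀ s ∈ S, U.map s ≤ U) (hSU : ∃ s ∈ S, U.map s ≠ ⊥) :
    ∃ s ∈ S, U.map s ≠ ⊥ ∧ ∀ t ∈ S, ((U.map s).map t).map s = ⊥ := by
  obtain ⟨s, ⟨hs, hsU⟩, hmin⟩ :=
    exists_minimalFor_of_wellFoundedLT (fun s ↦ s ∈ S ∧ U.map s ≠ ⊥) (fun s ↦ U.map s) hSU
  refine ⟨s, hs, hsU, fun t ht ↦ by_contra fun hstsU ↦ hsU ?_⟩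
  have map_sts : U.map (s * (t * s)) = ((U.map s).map t).map s := by
    simp only [Module.End.mul_eq_comp, Submodule.map_comp]
  have stsU_le : U.map (s * (t * s)) ≤ U.map s :=
    map_sts.trans_le (Submodule.map_mono ((Submodule.map_mono (hU s hs)).trans (hU t ht)))
  have sU_le : U.map s ≤ (U.map s).map (s * t) := by
    rw [Module.End.mul_eq_comp, Submodule.map_comp, ← map_sts]
    exact hmin ⟨S.mul_mem hs (S.mul_mem ht hs), map_sts ▸ hstsU⟩ stsU_le
  exact eq_bot_of_le_map_of_isNilpotent (hS _ (S.mul_mem hs ht)) sU_le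

theorem map_eq_bot_of_minimal_invariant (hS : ∀ s ∈ S, IsNilpotent s) {U : Submodule R M}
    (hU : Minimal (fun N ↦ N ≠ ⊥ ∧ ∀ s ∈ S, N.map s ≤ N) U) : ∀ s ∈ S, U.map s = ⊥ := by
  obtain ⟨⟨hU₀, hinv⟩, hmin⟩ := hU
  by_contra! hSU
  obtain ⟨s, hs, hsU, hstsU⟩ := exists_map_ne_bot_and_map_map_map_eq_bot hS hinv hSU
  let W : Submodule R M := ⨆ t ∈ S, (U.map s).map t
  have W_le : W ≤ U :=
    iSup₂_le fun t ht ↦ (Submodule.map_mono (hinv s hs)).trans (hinv t ht)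
  have sW_eq_bot : W.map s = ⊥ := by
    simpa only [W, Submodule.map_iSup, iSup_eq_bot] using hstsU
  have W_eq_bot : W = ⊥ := by
    by_contra hW
    have U_le : U ≤ W := hmin ⟨hW, fun r hr ↦ map_iSup_map_le S _ hr⟩ W_le
    exact hsU (le_bot_iff.1 ((Submodule.map_mono U_le).trans sW_eq_bot.le))
  have tsU_eq_bot : ∀ t ∈ S, (U.map s).map t = ⊥ := by
    simpa only [W, iSup_eq_bot] using W_eq_bot
  have U_le_sU : U ≤ U.map s :=
    hmin ⟨hsU, fun t ht ↦ (tsU_eq_bot t ht).trans_le bot_le⟩ (hinv s hs)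
  exact hU₀ (eq_bot_of_le_map_of_isNilpotent (hS s hs) U_le_sU)

theorem stmt9_general [Nontrivial M] (hS : ∀ s ∈ S, IsNilpotent s) :
    ∃ v : M, v ≠ 0 ∧ ∀ s ∈ S, s v = 0 := by
  obtain ⟨U, hU⟩ := exists_minimal_of_wellFoundedLT
    (fun N : Submodule R M ↦ N ≠ ⊥ ∧ ∀ s ∈ S, N.map s ≤ N) ⟨⊤, top_ne_bot, fun _ _ ↦ le_top⟩
  obtain ⟨v, hv, hv₀⟩ := Submodule.exists_mem_ne_zero_of_ne_bot hU.prop.1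
  refine ⟨v, hv₀, fun s hs ↦ ?_⟩
  rw [← Submodule.mem_bot R, ← map_eq_bot_of_minimal_invariant hS hU s hs]
  exact Submodule.mem_map_of_mem hv

end

/-- (Levitski) A multiplicative semigroup of nilpotent endomorphisms of a
nonzero finite-dimensional complex vector space has a common nonzero kernel
vector. -/
theorem stmt9 (V : Type*) [AddCommGroup V] [Module ℂ V]
    [FiniteDimensional ℂ V] [Nontrivial V]
    (S : Set (Module.End ℂ V))
    (hcomp : ∀ s ∈ S, ∀ t ∈ S, s * t ∈ S)
    (hnil : ∀ s ∈ S, IsNilpotent s) :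
    ∃ v : V, v ≠ 0 ∧ ∀ s ∈ S, s v = 0 :=
  stmt9_general (S := ⟨S, fun hs ht ↦ hcomp _ hs _ ht⟩) hnil
end
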